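/- arXiv:hep-th/9812140 — 5 statements merged into one kernel-verified Lean document; each statement's English description precedes it below -/
import Mathlib

section
/- D ∘ D = 0, ker D = k[x] × {0}, im D = (x^{r+1}) × {0}, and the map p ↦ p mod (x^{r+1}) induces a k[x]-module isomorphism ker D / im D ≅ k[x]/(x^{r+1}); i.e. the invariant cohomology of d for Chapline–Manton model 2 is the quotient of the algebra generated by F by the ideal generated by F^{r+1}. -/
/- Context: `k` a field, `r ≥ 1`, `M = k[x] × k[x]`, where `(p, q)` encodes
`p(F) + q(F)·H` in `k[F] ⊗ Λ(H)`; `D(p, q) = (x^{r+1}·q, 0)` encodes the exterior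
derivative on the small invariant algebra of Chapline–Manton model 2 (Bianchi identities
`dF = 0`, `dH = F^{r+1}`). -/

open LinearMap Polynomial

noncomputable section

variable (k : Type*) [Field k] (r : ℕ)

/-- The differential `D(p, q) = (x^{r+1}·q, 0)` on `M = k[x] × k[x]`. -/
def Dcm2 : (Polynomial k × Polynomial k) →ₗ[Polynomial k] (Polynomial k × Polynomial k) :=
  (((X : Polynomial k) ^ (r + 1)) •
      LinearMap.snd (Polynomial k) (Polynomial k) (Polynomial k)).prod 0

theorem Dcm2_apply' (a : Polynomial k × Polynomial k) :
    Dcm2 k r a = ((X : Polynomial k) ^ (r + 1) * a.2, 0) := by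
  simp [Dcm2]

theorem Dcm2_mem_ker (a : Polynomial k × Polynomial k) :
    a ∈ ker (Dcm2 k r) ↔ a.2 = 0 := by
  rw [LinearMap.mem_ker, Dcm2_apply']
  simp [Prod.ext_iff]

theorem Dcm2_mem_range (a : Polynomial k × Polynomial k) :
    a ∈ range (Dcm2 k r) ↔ a.1 ∈ Ideal.span {(X : Polynomial k) ^ (r + 1)} ∧ a.2 = 0 := by
  rw [LinearMap.mem_range, Ideal.mem_span_singleton]
  constructor
  · rintro ⟨b, rfl⟩
    rw [Dcm2_apply']
    exact ⟨Dvd.intro _ rfl, rfl⟩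
  · rintro ⟨⟨c, hc⟩, h2⟩
    refine ⟨(0, c), ?_⟩
    rw [Dcm2_apply']
    exact Prod.ext hc.symm h2.symm

/-- `D ∘ D = 0`, `ker D = k[x] × {0}`, `im D = (x^{r+1}) × {0}`, and
`p ↦ p mod (x^{r+1})` induces a `k[x]`-module isomorphism
`ker D / im D ≅ k[x]/(x^{r+1})`: the invariant cohomology of `d` for Chapline–Manton
model 2 is the quotient of the algebra generated by `F` by the ideal generated by
`F^{r+1}`. -/
theorem statement10 (hr : 1 ≤ r) :
    Dcm2 k r ∘ₗ Dcm2 k r = 0 ∧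
    ker (Dcm2 k r) = (⊤ : Submodule (Polynomial k) (Polynomial k)).prod ⊥ ∧
    range (Dcm2 k r) =
      Submodule.prod (Ideal.span {(X : Polynomial k) ^ (r + 1)}) (⊥ : Submodule (Polynomial k) (Polynomial k)) ∧
    ∃ e : (ker (Dcm2 k r) ⧸ (range (Dcm2 k r)).comap (ker (Dcm2 k r)).subtype)
        ≃ₗ[Polynomial k] (Polynomial k ⧸ Ideal.span {(X : Polynomial k) ^ (r + 1)}),
      ∀ (p : Polynomial k) (hp : ((p, 0) : Polynomial k × Polynomial k) ∈ ker (Dcm2 k r)),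
        e (((range (Dcm2 k r)).comap (ker (Dcm2 k r)).subtype).mkQ ⟨(p, 0), hp⟩) =
          Ideal.Quotient.mk (Ideal.span {(X : Polynomial k) ^ (r + 1)}) p := by
  refine ⟨?_, ?_, ?_, ?_⟩
  · refine LinearMap.ext fun a => ?_
    rw [LinearMap.comp_apply, Dcm2_apply', Dcm2_apply']
    simp
  · ext1 a
    rw [Dcm2_mem_ker, Submodule.mem_prod]
    simp
  · ext1 a
    rw [Dcm2_mem_range, Submodule.mem_prod]
    simp
  · let f : ker (Dcm2 k r) →ₗ[Polynomial k]
        (Polynomial k ⧸ Ideal.span {(X : Polynomial k) ^ (r + 1)}) :=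
      (Submodule.mkQ (Ideal.span {(X : Polynomial k) ^ (r + 1)})) ∘ₗ
        (LinearMap.fst (Polynomial k) (Polynomial k) (Polynomial k)) ∘ₗ
        (ker (Dcm2 k r)).subtype
    have hf : Function.Surjective f := by
      intro y
      obtain ⟨p, rfl⟩ := Submodule.mkQ_surjective _ y
      exact ⟨⟨(p, 0), (Dcm2_mem_ker k r _).2 rfl⟩, rfl⟩
    have hk : (range (Dcm2 k r)).comap (ker (Dcm2 k r)).subtype = ker f := by
      ext1 a
      have h2 := (Dcm2_mem_ker k r _).1 a.2
      rw [Submodule.mem_comap, Dcm2_mem_range, LinearMap.mem_ker]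
      refine Iff.trans ?_ (Submodule.Quotient.mk_eq_zero _).symm
      exact ⟨fun h => h.1, fun h => ⟨h, h2⟩⟩
    exact ⟨(Submodule.quotEquivOfEq _ _ hk).trans (f.quotKerEquivOfSurjective hf),
      fun p hp => rfl⟩

end
end

section
/- D ∘ D = 0, and ker D / im D is a two-dimensional k-vector space spanned by the classes of (1, 0) and (0, x^r); i.e. the cohomology E₂ in the (A, F)-sector of Chapline–Manton model 2 is generated by 1 and the ghost-number-one cocycle μ = a·F^r. -/
/- Context: `k` a field, `r ≥ 1`, `R = k[x]/(x^{r+1})`, `M = R × R`, where `(p, q)`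
encodes `p + q·a` with `a` the odd last ghost of the 1-form and `x` the curvature `F`
subject to `F^{r+1} = 0`; `D(p, q) = (x·q, 0)` encodes the differential `d₁` of the
descent-equation analysis of Chapline–Manton model 2 (`d₁a = F`, `d₁F = 0`). -/

open LinearMap Polynomial

noncomputable section

variable (k : Type*) [Field k] (r : ℕ)

/-- The truncated polynomial ring `k[x]/(x^{r+1})`. -/
abbrev Rcm2 : Type _ := Polynomial k ⧸ Ideal.span {(X : Polynomial k) ^ (r + 1)}

/-- The image of `x` in `k[x]/(x^{r+1})`. -/
def ξ : Rcm2 k r := Ideal.Quotient.mk _ (X : Polynomial k)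

/-- The `k`-linear differential `D(p, q) = (x·q, 0)` on `M = R × R`. -/
def Dcm2E1 : (Rcm2 k r × Rcm2 k r) →ₗ[k] (Rcm2 k r × Rcm2 k r) where
  toFun pq := (ξ k r * pq.2, 0)
  map_add' x y := by
    simp only [Prod.snd_add, mul_add, Prod.mk_add_mk, add_zero]
  map_smul' c x := by
    simp only [Prod.smul_snd, RingHom.id_apply, Prod.smul_mk, smul_zero,
      Algebra.mul_smul_comm c (ξ k r) x.2]

theorem aux_mk_eq_zero (f : Polynomial k) :
    (Ideal.Quotient.mk (Ideal.span {(X : Polynomial k) ^ (r + 1)}) f = 0) ↔ X ^ (r + 1) ∣ f := by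
  rw [Ideal.Quotient.eq_zero_iff_mem, Ideal.mem_span_singleton]

theorem aux_smul (c : k) (f : Polynomial k) :
    c • (Ideal.Quotient.mk (Ideal.span {(X : Polynomial k) ^ (r + 1)}) f : Rcm2 k r)
      = Ideal.Quotient.mk _ (C c * f) := by
  rw [← Polynomial.smul_eq_C_mul]
  rfl

theorem aux_A : ξ k r * ξ k r ^ r = 0 := by
  rw [← pow_succ', ξ, ← map_pow, aux_mk_eq_zero]

theorem aux_B (p : Rcm2 k r) : ∃ (c : k) (s : Rcm2 k r), p = c • 1 + ξ k r * s := by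
  obtain ⟨f, rfl⟩ := Ideal.Quotient.mk_surjective p
  refine ⟨f.coeff 0, Ideal.Quotient.mk _ f.divX, ?_⟩
  rw [← map_one (Ideal.Quotient.mk _), aux_smul, ξ, ← map_mul, ← map_add]
  congr 1
  rw [mul_one, add_comm, Polynomial.X_mul_divX_add]

theorem aux_C (q : Rcm2 k r) (h : ξ k r * q = 0) : ∃ c : k, q = c • ξ k r ^ r := by
  obtain ⟨f, rfl⟩ := Ideal.Quotient.mk_surjective q
  rw [ξ, ← map_mul, aux_mk_eq_zero, pow_succ', mul_dvd_mul_iff_left X_ne_zero] at h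
  obtain ⟨g, rfl⟩ := h
  obtain ⟨c, s, hs⟩ := aux_B k r (Ideal.Quotient.mk _ g)
  refine ⟨c, ?_⟩
  rw [map_mul, hs, map_pow]
  change ξ k r ^ r * _ = _
  rw [mul_add, ← mul_assoc, mul_comm (ξ k r ^ r) (ξ k r), aux_A, zero_mul, add_zero,
    mul_smul_comm, mul_one]

theorem aux_D (c : k) (s : Rcm2 k r) (h : c • (1 : Rcm2 k r) = ξ k r * s) : c = 0 := by
  obtain ⟨f, rfl⟩ := Ideal.Quotient.mk_surjective s
  rw [← map_one (Ideal.Quotient.mk _), aux_smul, ξ, ← map_mul, ← sub_eq_zero, ← map_sub,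
    aux_mk_eq_zero] at h
  have := (dvd_pow_self (X : Polynomial k) (Nat.succ_ne_zero r)).trans h
  rw [Polynomial.X_dvd_iff] at this
  simpa using this

theorem aux_E (c : k) (h : c • ξ k r ^ r = 0) : c = 0 := by
  rw [ξ, ← map_pow, aux_smul, aux_mk_eq_zero, Polynomial.X_pow_dvd_iff] at h
  simpa using h r (Nat.lt_succ_self r)

theorem aux_D_apply (p q : Rcm2 k r) : Dcm2E1 k r (p, q) = (ξ k r * q, 0) := rfl

/-- `D ∘ D = 0`, and `ker D / im D` is a two-dimensional `k`-vector space
spanned by the classes of `(1, 0)` and `(0, x^r)`: the cohomology `E₂` in the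
`(A, F)`-sector of Chapline–Manton model 2 is generated by `1` and the ghost-number-one
cocycle `μ = a·F^r`. -/
theorem statement11 (hr : 1 ≤ r) :
    Dcm2E1 k r ∘ₗ Dcm2E1 k r = 0 ∧
    ∃ (h1 : ((1, 0) : Rcm2 k r × Rcm2 k r) ∈ ker (Dcm2E1 k r))
      (h2 : ((0, ξ k r ^ r) : Rcm2 k r × Rcm2 k r) ∈ ker (Dcm2E1 k r)),
      Submodule.span k
        {((range (Dcm2E1 k r)).comap (ker (Dcm2E1 k r)).subtype).mkQ ⟨(1, 0), h1⟩,
         ((range (Dcm2E1 k r)).comap (ker (Dcm2E1 k r)).subtype).mkQ ⟨(0, ξ k r ^ r), h2⟩}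
        = ⊤ ∧
      LinearIndependent k
        ![((range (Dcm2E1 k r)).comap (ker (Dcm2E1 k r)).subtype).mkQ ⟨(1, 0), h1⟩,
          ((range (Dcm2E1 k r)).comap (ker (Dcm2E1 k r)).subtype).mkQ ⟨(0, ξ k r ^ r), h2⟩] := by
  have h1 : ((1, 0) : Rcm2 k r × Rcm2 k r) ∈ ker (Dcm2E1 k r) := by
    rw [LinearMap.mem_ker, aux_D_apply, mul_zero]; rfl
  have h2 : ((0, ξ k r ^ r) : Rcm2 k r × Rcm2 k r) ∈ ker (Dcm2E1 k r) := by
    rw [LinearMap.mem_ker, aux_D_apply, aux_A]; rfl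
  refine ⟨?_, h1, h2, ?_, ?_⟩
  · refine LinearMap.ext fun x => ?_
    obtain ⟨p, q⟩ := x
    rw [LinearMap.comp_apply, aux_D_apply, aux_D_apply, mul_zero]; rfl
  · rw [eq_top_iff]
    rintro y -
    obtain ⟨⟨⟨p, q⟩, hpq⟩, rfl⟩ := Submodule.mkQ_surjective _ y
    have hq : ξ k r * q = 0 := by
      have := hpq
      rw [LinearMap.mem_ker, aux_D_apply] at this
      exact congrArg Prod.fst this
    obtain ⟨d, hd⟩ := aux_C k r q hq
    obtain ⟨c, s, hs⟩ := aux_B k r p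
    rw [Submodule.mem_span_pair]
    refine ⟨c, d, ?_⟩
    rw [← map_smul, ← map_smul, ← map_add, ← sub_eq_zero, ← map_sub, Submodule.mkQ_apply,
      Submodule.Quotient.mk_eq_zero, Submodule.mem_comap]
    refine ⟨(0, -s), ?_⟩
    rw [aux_D_apply]
    refine Prod.ext ?_ ?_
    · change ξ k r * -s = c • 1 + d • 0 - p
      rw [hs, smul_zero]; ring
    · change 0 = c • 0 + d • ξ k r ^ r - q
      rw [hd, smul_zero]; ring
  · rw [LinearIndependent.pair_iff]
    intro c d h
    rw [← map_smul, ← map_smul, ← map_add, Submodule.mkQ_apply,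
      Submodule.Quotient.mk_eq_zero, Submodule.mem_comap] at h
    obtain ⟨⟨p, s⟩, h⟩ := h
    rw [aux_D_apply] at h
    have e1 : ξ k r * s = c • 1 + d • 0 := congrArg Prod.fst h
    have e2 : 0 = c • 0 + d • ξ k r ^ r := congrArg Prod.snd h
    rw [smul_zero, add_zero] at e1
    rw [smul_zero, zero_add] at e2
    exact ⟨aux_D k r c s e1.symm, aux_E k r d e2.symm⟩

end
end

section
/- (i) The kernel of D is exactly the image of the k-algebra homomorphism k[t] → k[x, z] sending t to z − x²/2, i.e. ker D = k[z − x²/2]; (ii) D is surjective. Consequently the invariant cohomology of d for Chapline–Manton model 3 is the polynomial algebra in the single variable G_M = G − F²/2. -/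
/- Context: `k` a field of characteristic zero, `k[x, z]` the polynomial ring in two
variables (`x = X 0`, `z = X 1`), and `D = ∂/∂x + x·∂/∂z` the unique `k`-linear derivation
with `Dx = 1`, `Dz = x`.  (In Chapline–Manton model 3, with Bianchi identities `dF = −H`,
`dH = 0`, `dG = −FH`, the exterior derivative on the small invariant algebra reduces on
polynomials in `x = F`, `z = G` to the cocycle condition `Dp = 0` and coboundary condition
`p ∈ im D`.) -/

open MvPolynomial

noncomputable section

variable (k : Type*) [Field k] [CharZero k]

/-- The derivation `D = ∂/∂x + x·∂/∂z` of `k[x, z]`, with `Dx = 1`, `Dz = x`. -/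
def Dcm3 : Derivation k (MvPolynomial (Fin 2) k) (MvPolynomial (Fin 2) k) :=
  pderiv 0 + (X 0 : MvPolynomial (Fin 2) k) • pderiv 1


theorem Dcm3_X0 : Dcm3 k (X 0) = 1 := by
  simp [Dcm3, pderiv_X]

theorem Dcm3_X1 : Dcm3 k (X 1) = X 0 := by
  simp [Dcm3, pderiv_X]

/-- The substitution `x ↦ x`, `z ↦ z - x²/2`. -/
def Tcm3 : MvPolynomial (Fin 2) k →ₐ[k] MvPolynomial (Fin 2) k :=
  aeval ![X 0, X 1 - C (2⁻¹ : k) * X 0 ^ 2]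

/-- The substitution `x ↦ x`, `z ↦ z + x²/2`. -/
def Scm3 : MvPolynomial (Fin 2) k →ₐ[k] MvPolynomial (Fin 2) k :=
  aeval ![X 0, X 1 + C (2⁻¹ : k) * X 0 ^ 2]

theorem TScm3 (p : MvPolynomial (Fin 2) k) : Tcm3 k (Scm3 k p) = p := by
  have h : (Tcm3 k).comp (Scm3 k) = AlgHom.id k _ := by
    ext i : 1
    fin_cases i <;> simp [Tcm3, Scm3, ← algebraMap_eq]
  exact DFunLike.congr_fun h p

theorem STcm3 (p : MvPolynomial (Fin 2) k) : Scm3 k (Tcm3 k p) = p := by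
  have h : (Scm3 k).comp (Tcm3 k) = AlgHom.id k _ := by
    ext i : 1
    fin_cases i <;> simp [Tcm3, Scm3, ← algebraMap_eq]
  exact DFunLike.congr_fun h p

theorem Dcm3_u : Dcm3 k (X 1 - C (2⁻¹ : k) * X 0 ^ 2) = 0 := by
  have h2 : (C (2⁻¹ : k) : MvPolynomial (Fin 2) k) * 2 = 1 := by
    have : (2 : MvPolynomial (Fin 2) k) = C 2 := (map_ofNat C 2).symm
    rw [this, ← C_mul]; simp
  rw [map_sub, Derivation.leibniz, Derivation.leibniz_pow, Dcm3_X0, Dcm3_X1,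
    ← algebraMap_eq, Derivation.map_algebraMap, algebraMap_eq]
  simp only [smul_eq_mul, nsmul_eq_mul]
  push_cast
  linear_combination (-X 0) * h2

theorem Dcm3_T (p : MvPolynomial (Fin 2) k) :
    Dcm3 k (Tcm3 k p) = Tcm3 k (pderiv 0 p) := by
  induction p using MvPolynomial.induction_on with
  | C a =>
    rw [← algebraMap_eq]; simp
  | add p q hp hq => simp [hp, hq]
  | mul_X p i hp =>
    rw [map_mul, Derivation.leibniz, Derivation.leibniz, hp, map_add]
    simp only [smul_eq_mul, map_mul]
    congr 2
    fin_cases i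
    · simp [Tcm3, Dcm3_X0, pderiv_X]
    · have := Dcm3_u k
      simp [Tcm3, pderiv_X] at this ⊢
      exact this

/-- Integration with respect to `x`. -/
def Icm3 : MvPolynomial (Fin 2) k →ₗ[k] MvPolynomial (Fin 2) k :=
  (basisMonomials (Fin 2) k).constr k
    (fun s => monomial (s + Finsupp.single 0 1) (((s 0 : k) + 1)⁻¹))

theorem Icm3_monomial (s : Fin 2 →₀ ℕ) (a : k) :
    Icm3 k (monomial s a) = monomial (s + Finsupp.single 0 1) (a * ((s 0 : k) + 1)⁻¹) := by
  have h := (basisMonomials (Fin 2) k).constr_basis k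
    (fun s => (monomial (s + Finsupp.single 0 1) (((s 0 : k) + 1)⁻¹) :
      MvPolynomial (Fin 2) k)) s
  have h1 : (monomial s a : MvPolynomial (Fin 2) k) = a • monomial s 1 := by
    simp [smul_monomial]
  rw [h1, map_smul]
  rw [coe_basisMonomials] at h
  rw [Icm3, h, smul_monomial, smul_eq_mul]

theorem pderiv_Icm3 (p : MvPolynomial (Fin 2) k) : pderiv 0 (Icm3 k p) = p := by
  induction p using MvPolynomial.induction_on' with
  | monomial s a =>
    have : (s 0 : k) + 1 ≠ 0 := Nat.cast_add_one_ne_zero _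
    rw [Icm3_monomial, pderiv_monomial]
    simp [mul_assoc, this]
  | add p q hp hq => simp [hp, hq]

theorem Icm3_pderiv (p : MvPolynomial (Fin 2) k) :
    Icm3 k (pderiv 0 p) = p - Polynomial.aeval (X 1 : MvPolynomial (Fin 2) k)
      (aeval ![(0 : Polynomial k), Polynomial.X] p) := by
  induction p using MvPolynomial.induction_on' with
  | monomial s a =>
    rw [pderiv_monomial, Icm3_monomial, aeval_monomial,
      Finsupp.prod_fintype _ _ (by simp), Fin.prod_univ_two]
    by_cases h : s 0 = 0
    · simp [h]
      rw [monomial_eq, Finsupp.prod_fintype _ _ (by simp), Fin.prod_univ_two]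
      simp [h, algebraMap_eq]
    · have h1 : (s 0 : k) ≠ 0 := Nat.cast_ne_zero.mpr h
      have h2 : s - Finsupp.single 0 1 + Finsupp.single 0 1 = s := by
        ext i; fin_cases i <;> simp; omega
      have h3 : ((s 0 - 1 : ℕ) : k) + 1 = s 0 := by
        rw [← Nat.cast_add_one]; congr 1; omega
      rw [h2]
      simp [h, h1, h3]
  | add p q hp hq => simp only [map_add, hp, hq]; ring

/-- (i) `ker D` is exactly the image of the `k`-algebra homomorphism
`k[t] → k[x, z]` sending `t ↦ z − x²/2`, i.e. `ker D = k[z − x²/2]`; (ii) `D` is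
surjective.  Consequently the invariant cohomology of `d` for Chapline–Manton model 3 is
the polynomial algebra in the single variable `G_M = G − F²/2`. -/
theorem statement12 :
    (∀ p : MvPolynomial (Fin 2) k, Dcm3 k p = 0 ↔
      ∃ f : Polynomial k,
        Polynomial.aeval ((X 1 : MvPolynomial (Fin 2) k) - C (2⁻¹ : k) * X 0 ^ 2) f = p) ∧
    Function.Surjective (Dcm3 k) := by
  have hT : ∀ f : Polynomial k, Tcm3 k (Polynomial.aeval (X 1) f) =
      Polynomial.aeval ((X 1 : MvPolynomial (Fin 2) k) - C (2⁻¹ : k) * X 0 ^ 2) f := by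
    intro f
    rw [← Polynomial.aeval_algHom_apply]
    simp [Tcm3]
  refine ⟨fun p => ⟨fun h => ?_, ?_⟩, fun p => ⟨Tcm3 k (Icm3 k (Scm3 k p)), ?_⟩⟩
  · have h1 : pderiv 0 (Scm3 k p) = 0 := by
      rw [← TScm3 k p, Dcm3_T] at h
      rw [← STcm3 k (pderiv 0 (Scm3 k p)), h, map_zero]
    have h2 := Icm3_pderiv k (Scm3 k p)
    rw [h1, map_zero] at h2
    refine ⟨aeval ![(0 : Polynomial k), Polynomial.X] (Scm3 k p), ?_⟩
    rw [← hT, ← sub_eq_zero.mp h2.symm, TScm3]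
  · rintro ⟨f, rfl⟩
    rw [Derivation.map_aeval, Dcm3_u, smul_zero]
  · rw [Dcm3_T, pderiv_Icm3, TScm3]

end
end

section
/- In A one has γ(A₁₀B₀₂ + A₀₁B₁₁) + d(A₀₁B₀₂) = 0, and d(A₁₀B₀₂ + A₀₁B₁₁) + γ(A₁₀B₁₁ + A₀₁B₂₀) = F·B₀₂. (Thus the ghost-number-three γ-cocycle A₀₁B₀₂ can be lifted once, and the obstruction to lifting it a second time is the nontrivial γ-cocycle F·B₀₂.) -/
/- Context: the 'small algebra' `A = ℚ[B₂₀, B₁₁, B₀₂, F, E] ⊗ Λ(A₁₀, A₀₁, H, K, L)` of a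
free 1-form gauge field `A₁₀` (ghost `A₀₁`, curvature `F = dA₁₀`, with `E = dA₀₁`) and a
free 2-form gauge field `B₂₀` (ghosts `B₁₁`, `B₀₂`, curvature `H = dB₂₀`, with
`K = dB₁₁`, `L = dB₀₂`), realized as `MvPolynomial (Fin 5) ℚ ⊗ ExteriorAlgebra ℚ (Fin 5 → ℚ)`
with even generators `B₂₀, B₁₁, B₀₂, F, E` (polynomial variables `0,…,4`) and odd
generators `A₁₀, A₀₁, H, K, L` (exterior generators `0,…,4`).  The unique odd derivations
`d` (with `dA₁₀ = F`, `dA₀₁ = E`, `dB₂₀ = H`, `dB₁₁ = K`, `dB₀₂ = L`, zero on curvatures)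
and `γ` (with `γA₁₀ = −E`, `γB₂₀ = −K`, `γB₁₁ = −L`, zero on the other generators) are
built from partial derivatives, contractions and multiplications. -/

open TensorProduct

noncomputable section

/-- The small algebra `A = ℚ[B₂₀, B₁₁, B₀₂, F, E] ⊗ Λ(A₁₀, A₀₁, H, K, L)`. -/
abbrev SmallAlg : Type :=
  MvPolynomial (Fin 5) ℚ ⊗[ℚ] ExteriorAlgebra ℚ (Fin 5 → ℚ)

/-- The even generators (as elements of the small algebra). -/
def evGen (i : Fin 5) : SmallAlg := (MvPolynomial.X i) ⊗ₜ[ℚ] 1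

/-- The odd generators (as elements of the small algebra). -/
def odGen (i : Fin 5) : SmallAlg := 1 ⊗ₜ[ℚ] (ExteriorAlgebra.ι ℚ (Pi.single i 1))

def B20 : SmallAlg := evGen 0
def B11 : SmallAlg := evGen 1
def B02 : SmallAlg := evGen 2
def Fcur : SmallAlg := evGen 3
def Ecur : SmallAlg := evGen 4
def A10 : SmallAlg := odGen 0
def A01 : SmallAlg := odGen 1
def Hcur : SmallAlg := odGen 2
def Kcur : SmallAlg := odGen 3
def Lcur : SmallAlg := odGen 4

/-- The coordinate functional dual to the `i`-th exterior generator. -/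
def coordφ (i : Fin 5) : Module.Dual ℚ (Fin 5 → ℚ) := LinearMap.proj i

/-- The elementary odd derivation sending the odd generator `i` to the even generator `j`
(and all other generators to zero): `X j · ∂/∂(θ i)`. -/
def odToEv (i j : Fin 5) : SmallAlg →ₗ[ℚ] SmallAlg :=
  TensorProduct.map (LinearMap.mulLeft ℚ (MvPolynomial.X j))
    (CliffordAlgebra.contractLeft (Q := (0 : QuadraticForm ℚ (Fin 5 → ℚ))) (coordφ i))

/-- The elementary odd derivation sending the even generator `i` to the odd generator `j`
(and all other generators to zero): `θ j · ∂/∂(x i)`. -/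
def evToOd (i j : Fin 5) : SmallAlg →ₗ[ℚ] SmallAlg :=
  TensorProduct.map (MvPolynomial.pderiv i).toLinearMap
    (LinearMap.mulLeft ℚ (ExteriorAlgebra.ι ℚ (Pi.single j 1)))

/-- The odd derivation `d`: `dA₁₀ = F`, `dA₀₁ = E`, `dB₂₀ = H`, `dB₁₁ = K`, `dB₀₂ = L`,
`dF = dE = dH = dK = dL = 0`. -/
def dSmall : SmallAlg →ₗ[ℚ] SmallAlg :=
  odToEv 0 3 + odToEv 1 4 + evToOd 0 2 + evToOd 1 3 + evToOd 2 4

/-- The odd derivation `γ`: `γA₁₀ = −E`, `γA₀₁ = 0`, `γB₂₀ = −K`, `γB₁₁ = −L`,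
`γB₀₂ = 0`, `γF = γE = γH = γK = γL = 0`. -/
def γSmall : SmallAlg →ₗ[ℚ] SmallAlg :=
  -(odToEv 0 4 + evToOd 0 3 + evToOd 1 4)

theorem aux_mul (i j : Fin 5) : odGen i * evGen j =
    (MvPolynomial.X j) ⊗ₜ[ℚ] (ExteriorAlgebra.ι ℚ (Pi.single i 1)) := by
  simp [odGen, evGen, Algebra.TensorProduct.tmul_mul_tmul]

theorem aux_odToEv (a b i j : Fin 5) : odToEv a b (odGen i * evGen j) =
    if i = a then evGen b * evGen j else 0 := by
  rw [aux_mul, odToEv, TensorProduct.map_tmul]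
  have h : (CliffordAlgebra.contractLeft (Q := (0 : QuadraticForm ℚ (Fin 5 → ℚ))) (coordφ a))
      (ExteriorAlgebra.ι ℚ (Pi.single i 1)) = if i = a then 1 else 0 := by
    refine (CliffordAlgebra.contractLeft_ι _ _ _).trans ?_
    by_cases hi : i = a
    · subst hi
      simp [coordφ]
    · have : a ≠ i := fun h => hi h.symm
      simp [coordφ, hi, Pi.single_apply, this]
  rw [h]
  split_ifs
  · simp [evGen, Algebra.TensorProduct.tmul_mul_tmul]
  · simp

theorem aux_evToOd (a b i j : Fin 5) : evToOd a b (odGen i * evGen j) =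
    if j = a then odGen b * odGen i else 0 := by
  rw [aux_mul, evToOd, TensorProduct.map_tmul]
  by_cases h : j = a
  · subst h
    simp [odGen, Algebra.TensorProduct.tmul_mul_tmul]
  · simp [h, MvPolynomial.pderiv_X_of_ne (fun h' => h h')]

/-- in `A` one has `γ(A₁₀B₀₂ + A₀₁B₁₁) + d(A₀₁B₀₂) = 0`, and
`d(A₁₀B₀₂ + A₀₁B₁₁) + γ(A₁₀B₁₁ + A₀₁B₂₀) = F·B₀₂`.  (Thus the ghost-number-three
γ-cocycle `A₀₁B₀₂` can be lifted once, and the obstruction to lifting it a second time is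
the nontrivial γ-cocycle `F·B₀₂`.) -/
theorem statement15 :
    γSmall (A10 * B02 + A01 * B11) + dSmall (A01 * B02) = 0 ∧
    dSmall (A10 * B02 + A01 * B11) + γSmall (A10 * B11 + A01 * B20) = Fcur * B02 := by
  constructor
  · simp [γSmall, dSmall, A10, A01, B02, B11, aux_odToEv, aux_evToOd]
    try abel
  · simp [γSmall, dSmall, A10, A01, B02, B11, B20, Fcur, aux_odToEv, aux_evToOd]
    try abel

end
end

section
/- For all integers l ≥ 1, k ≥ 0 and m ∈ {0, 1}, set a = A₀₁·B₀₂^l·F^k·H^m, b = A₁₀·B₀₂^l·F^k·H^m + l·A₀₁·B₁₁·B₀₂^{l−1}·F^k·H^m, and c = l·A₁₀·B₁₁·B₀₂^{l−1}·F^k·H^m + l·A₀₁·B₂₀·B₀₂^{l−1}·F^k·H^m + (l(l−1)/2)·A₀₁·B₁₁²·B₀₂^{l−2}·F^k·H^m (the last term being omitted when l = 1, its coefficient being zero). Then in A: γa = 0, da + γb = 0, and db + γc = F^{k+1}·B₀₂^l·H^m; i.e. a is a γ-cocycle that can be lifted exactly once, the obstruction to a second lift being F^{k+1}B₀₂^lH^m.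 -/
/- Context: the 'small algebra' `A = ℚ[B₂₀, B₁₁, B₀₂, F, E] ⊗ Λ(A₁₀, A₀₁, H, K, L)` of a
free 1-form gauge field `A₁₀` (ghost `A₀₁`, curvature `F = dA₁₀`, with `E = dA₀₁`) and a
free 2-form gauge field `B₂₀` (ghosts `B₁₁`, `B₀₂`, curvature `H = dB₂₀`, with
`K = dB₁₁`, `L = dB₀₂`), realized as `MvPolynomial (Fin 5) ℚ ⊗ ExteriorAlgebra ℚ (Fin 5 → ℚ)`
with even generators `B₂₀, B₁₁, B₀₂, F, E` (polynomial variables `0,…,4`) and odd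
generators `A₁₀, A₀₁, H, K, L` (exterior generators `0,…,4`).  The unique odd derivations
`d` (with `dA₁₀ = F`, `dA₀₁ = E`, `dB₂₀ = H`, `dB₁₁ = K`, `dB₀₂ = L`, zero on curvatures)
and `γ` (with `γA₁₀ = −E`, `γB₂₀ = −K`, `γB₁₁ = −L`, zero on the other generators) are
built from partial derivatives, contractions and multiplications. -/

open TensorProduct

noncomputable section

/-- Odd generator in the exterior algebra. -/
def thG (i : Fin 5) : ExteriorAlgebra ℚ (Fin 5 → ℚ) := ExteriorAlgebra.ι ℚ (Pi.single i 1)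

theorem evToOd_t (i j : Fin 5) (p : MvPolynomial (Fin 5) ℚ)
    (w : ExteriorAlgebra ℚ (Fin 5 → ℚ)) :
    evToOd i j (p ⊗ₜ[ℚ] w) = (MvPolynomial.pderiv i p) ⊗ₜ[ℚ] (thG j * w) := rfl

theorem contr_th (i j : Fin 5) (w : ExteriorAlgebra ℚ (Fin 5 → ℚ)) :
    CliffordAlgebra.contractLeft (Q := (0 : QuadraticForm ℚ (Fin 5 → ℚ))) (coordφ i) (thG j * w)
      = (if i = j then (1 : ℚ) else 0) • w - thG j *
        CliffordAlgebra.contractLeft (Q := (0 : QuadraticForm ℚ (Fin 5 → ℚ))) (coordφ i) w := by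
  have h := CliffordAlgebra.contractLeft_ι_mul (Q := (0 : QuadraticForm ℚ (Fin 5 → ℚ)))
    (coordφ i) (Pi.single j 1) w
  refine h.trans ?_
  have h2 : coordφ i (Pi.single j (1 : ℚ)) = if i = j then (1 : ℚ) else 0 := by
    simp [coordφ, Pi.single_apply]
  rw [h2]
  rfl

theorem contr_H (i m : ℕ) (hi : i < 2) (hm : m = 0 ∨ m = 1) :
    CliffordAlgebra.contractLeft (Q := (0 : QuadraticForm ℚ (Fin 5 → ℚ)))
      (coordφ (Fin.ofNat 5 i)) (thG 2 ^ m) = 0 := by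
  have h1 : CliffordAlgebra.contractLeft (Q := (0 : QuadraticForm ℚ (Fin 5 → ℚ)))
      (coordφ (Fin.ofNat 5 i)) 1 = 0 := CliffordAlgebra.contractLeft_one _ _
  rcases hm with rfl | rfl
  · rw [pow_zero]; exact h1
  · have h := contr_th (Fin.ofNat 5 i) 2 1
    rw [mul_one] at h
    rw [pow_one]
    refine h.trans ?_
    erw [h1]
    interval_cases i <;> simp [Fin.ext_iff]

theorem odToEv_t (i : ℕ) (hi : i < 2) (j a : Fin 5) (m : ℕ) (hm : m = 0 ∨ m = 1)
    (p : MvPolynomial (Fin 5) ℚ) :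
    odToEv (Fin.ofNat 5 i) j (p ⊗ₜ[ℚ] (thG a * thG 2 ^ m))
      = (if (Fin.ofNat 5 i) = a then (1 : ℚ) else 0) •
        ((MvPolynomial.X j * p) ⊗ₜ[ℚ] (thG 2 ^ m)) := by
  have h : odToEv (Fin.ofNat 5 i) j (p ⊗ₜ[ℚ] (thG a * thG 2 ^ m))
      = (MvPolynomial.X j * p) ⊗ₜ[ℚ] 
        CliffordAlgebra.contractLeft (Q := (0 : QuadraticForm ℚ (Fin 5 → ℚ)))
          (coordφ (Fin.ofNat 5 i)) (thG a * thG 2 ^ m) := rfl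
  rw [h, contr_th, contr_H i m hi hm, mul_zero, sub_zero, TensorProduct.tmul_smul]

theorem od0 (j a : Fin 5) (m : ℕ) (hm : m = 0 ∨ m = 1) (p : MvPolynomial (Fin 5) ℚ) :
    odToEv 0 j (p ⊗ₜ[ℚ] (thG a * thG 2 ^ m))
      = (if 0 = a then (1 : ℚ) else 0) • ((MvPolynomial.X j * p) ⊗ₜ[ℚ] (thG 2 ^ m)) :=
  odToEv_t 0 (by norm_num) j a m hm p

theorem od1 (j a : Fin 5) (m : ℕ) (hm : m = 0 ∨ m = 1) (p : MvPolynomial (Fin 5) ℚ) :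
    odToEv 1 j (p ⊗ₜ[ℚ] (thG a * thG 2 ^ m))
      = (if 1 = a then (1 : ℚ) else 0) • ((MvPolynomial.X j * p) ⊗ₜ[ℚ] (thG 2 ^ m)) :=
  odToEv_t 1 (by norm_num) j a m hm p

theorem ev_eq (i : Fin 5) : evGen i = (MvPolynomial.X i) ⊗ₜ[ℚ] 1 := rfl
theorem od_eq (i : Fin 5) : odGen i = 1 ⊗ₜ[ℚ] thG i := rfl

set_option maxHeartbeats 2000000 in
/-- for all integers `l ≥ 1`, `k ≥ 0` and `m ∈ {0, 1}`, set
`a = A₀₁·B₀₂^l·F^k·H^m`,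
`b = A₁₀·B₀₂^l·F^k·H^m + l·A₀₁·B₁₁·B₀₂^{l−1}·F^k·H^m`, and
`c = l·A₁₀·B₁₁·B₀₂^{l−1}·F^k·H^m + l·A₀₁·B₂₀·B₀₂^{l−1}·F^k·H^m
      + (l(l−1)/2)·A₀₁·B₁₁²·B₀₂^{l−2}·F^k·H^m`
(the last term being omitted when `l = 1`, its coefficient being zero).  Then in `A`:
`γa = 0`, `da + γb = 0`, and `db + γc = F^{k+1}·B₀₂^l·H^m`: `a` is a γ-cocycle that can
be lifted exactly once, the obstruction to a second lift being `F^{k+1}B₀₂^lH^m`. -/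
theorem statement18 (l k m : ℕ) (hl : 1 ≤ l) (hm : m = 0 ∨ m = 1) :
    γSmall (A01 * B02 ^ l * Fcur ^ k * Hcur ^ m) = 0 ∧
    dSmall (A01 * B02 ^ l * Fcur ^ k * Hcur ^ m) +
      γSmall (A10 * B02 ^ l * Fcur ^ k * Hcur ^ m +
        (l : ℚ) • (A01 * B11 * B02 ^ (l - 1) * Fcur ^ k * Hcur ^ m)) = 0 ∧
    dSmall (A10 * B02 ^ l * Fcur ^ k * Hcur ^ m +
        (l : ℚ) • (A01 * B11 * B02 ^ (l - 1) * Fcur ^ k * Hcur ^ m)) +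
      γSmall ((l : ℚ) • (A10 * B11 * B02 ^ (l - 1) * Fcur ^ k * Hcur ^ m) +
        (l : ℚ) • (A01 * B20 * B02 ^ (l - 1) * Fcur ^ k * Hcur ^ m) +
        ((l * (l - 1) / 2 : ℚ)) • (A01 * B11 ^ 2 * B02 ^ (l - 2) * Fcur ^ k * Hcur ^ m)) =
      Fcur ^ (k + 1) * B02 ^ l * Hcur ^ m := by
  simp only [A01, A10, B02, B11, B20, Fcur, Hcur, ev_eq, od_eq, Algebra.TensorProduct.tmul_pow,
    Algebra.TensorProduct.tmul_mul_tmul, one_pow, mul_one, one_mul]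
  simp only [dSmall, γSmall, LinearMap.add_apply, LinearMap.neg_apply, map_add, map_smul,
    od0 _ _ m hm, od1 _ _ m hm, evToOd_t]
  obtain ⟨n, rfl⟩ : ∃ n, l = n + 1 := ⟨l - 1, by omega⟩
  simp [MvPolynomial.pderiv_X, Derivation.leibniz_pow]
  have e1 : (MvPolynomial.X 3 ^ k * (((n : MvPolynomial (Fin 5) ℚ) + 1) * MvPolynomial.X 2 ^ n))
      = ((n : ℚ) + 1) • (MvPolynomial.X 3 ^ k * MvPolynomial.X 2 ^ n) := by
    rw [MvPolynomial.smul_eq_C_mul]; simp; ring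
  have e2 : (MvPolynomial.X 3 ^ k * (MvPolynomial.X 1 *
        ((n : MvPolynomial (Fin 5) ℚ) * MvPolynomial.X 2 ^ (n - 1))))
      = (n : ℚ) • (MvPolynomial.X 3 ^ k * (MvPolynomial.X 1 * MvPolynomial.X 2 ^ (n - 1))) := by
    rw [MvPolynomial.smul_eq_C_mul]; simp; ring
  have e3 : (MvPolynomial.X 3 ^ k * (MvPolynomial.X 2 ^ (n - 1) *
        ((2 : MvPolynomial (Fin 5) ℚ) * MvPolynomial.X 1)))
      = (2 : ℚ) • (MvPolynomial.X 3 ^ k * (MvPolynomial.X 1 * MvPolynomial.X 2 ^ (n - 1))) := by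
    rw [MvPolynomial.smul_eq_C_mul, map_ofNat]; ring
  have e4 : (MvPolynomial.X 3 ^ (k + 1) * MvPolynomial.X 2 ^ (n + 1) : MvPolynomial (Fin 5) ℚ)
      = MvPolynomial.X 3 * (MvPolynomial.X 2 ^ (n + 1) * MvPolynomial.X 3 ^ k) := by ring
  rw [e1, e2, e3, e4]
  simp only [← TensorProduct.smul_tmul']
  constructor <;> module


end
end
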